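/- Example 1, first channel (Coding scheme 1 beats Coding scheme 2): Consider the binary SD-MAWC with X1 = X2 = S-alphabet = Y-alphabet = Z-alphabet = {0,1}, S ~ Bernoulli(p) i.i.d., legitimate output Y = X1 when S = 0 and Y = X2 when S = 1, and eavesdropper output Z = X2 (both outputs deterministic given the inputs and state). Then the rate pair (min{1 - p, 1 - h(p)}, 0) belongs to the region R_1 (achievable by Coding scheme 1); moreover every pair (R1, 0) in R_2 satisfies R1 <= I(U1;Y|U2) for some admissible distribution, and for p sufficiently large the maximum of I(U1;Y|U2) over admissible distributions is strictly smaller than min{1 - p, 1 - h(p)}, so the pair (min{1 - p, 1 - h(p)}, 0) is not in R_2. -/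

import Mathlib

/-!
The pair `(min {1 - p, 1 - h(p)}, 0)` comes from the third subregion of `R_1`, with `V = S`,
constant `U`, and independent fair bits `X1 = U1` and `X2 = U2`. All variables are then functions
of the state and two fair bits, and an entropy is read off from how many of the two bits a variable
reveals in each state: `I(V;Y) = I(V;Z,U,U2) = 0`, `I(U1;Y|V,U,U2) = 1 - p`,
`I(U1;Z|S,U,U2) = 0` and `R_SUM = min {1, 1 - h(p)}`. So no key is needed: `U1` leaks nothing
because `Z = X2`.

In Coding scheme 2 the decoder does not learn the state through `V`. Given `U2 = b`, the law of `Y`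
is `(1 - p) P_{X1|U1,S=0} + p P_{X2|U2=b,S=1}`, so the choice of `U1` only acts through the state
`S = 0`, blurred by the unknown state. The information is at most the worst relative entropy to a
fixed reference law; replacing `X1` by a fair bit gives a reference law whose masses are at least
`(1 - p) / 2` and whose distance to every output law is at most `(1 - p) / 2`. The χ² bound then
yields `I(U1;Y|U2) ≤ (1 - p) / ((1 + p) ln 2)`, which is below `1 - p` once `p ≥ 1 / 2`. Since
`h(p) → 0` as `p → 1`, the minimum equals `1 - p` for `p` near `1`.
-/

open scoped BigOperators

noncomputable section

namespace Paper

/-- `p` is a probability mass function on the finite type `α`. -/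
def IsPmf {α : Type*} [Fintype α] (p : α → ℝ) : Prop :=
  (∀ a, 0 ≤ p a) ∧ ∑ a, p a = 1

/-- `k` is a conditional pmf (a channel / stochastic kernel). -/
def IsKernel {α β : Type*} [Fintype β] (k : α → β → ℝ) : Prop :=
  ∀ a, IsPmf (k a)

/-- Shannon entropy (base 2) of a mass function on a finite type. -/
def ent {α : Type*} [Fintype α] (p : α → ℝ) : ℝ :=
  -∑ a, p a * Real.logb 2 (p a)

/-- Law (pushforward) of the random variable `X` under the mass function `p`. -/
def law {Ω α : Type*} [Fintype Ω] [DecidableEq α] (p : Ω → ℝ) (X : Ω → α) :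
    α → ℝ := fun a => ∑ ω, if X ω = a then p ω else 0

/-- Entropy `H(X)` of a random variable `X`. -/
def H {Ω α : Type*} [Fintype Ω] [Fintype α] [DecidableEq α] (p : Ω → ℝ)
    (X : Ω → α) : ℝ := ent (law p X)

/-- Conditional entropy `H(X|Y)`. -/
def Hc {Ω α β : Type*} [Fintype Ω] [Fintype α] [Fintype β] [DecidableEq α]
    [DecidableEq β] (p : Ω → ℝ) (X : Ω → α) (Y : Ω → β) : ℝ :=
  H p (fun ω => (X ω, Y ω)) - H p Y

/-- Mutual information `I(X;Y)`. -/
def MI {Ω α β : Type*} [Fintype Ω] [Fintype α] [Fintype β] [DecidableEq α]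
    [DecidableEq β] (p : Ω → ℝ) (X : Ω → α) (Y : Ω → β) : ℝ :=
  H p X + H p Y - H p (fun ω => (X ω, Y ω))

/-- Conditional mutual information `I(X;Y|Z)`. -/
def cMI {Ω α β γ : Type*} [Fintype Ω] [Fintype α] [Fintype β] [Fintype γ]
    [DecidableEq α] [DecidableEq β] [DecidableEq γ] (p : Ω → ℝ) (X : Ω → α)
    (Y : Ω → β) (Z : Ω → γ) : ℝ :=
  Hc p X Z - Hc p X (fun ω => (Y ω, Z ω))

/-- Kullback–Leibler divergence (base 2). -/
def KL {α : Type*} [Fintype α] (p q : α → ℝ) : ℝ :=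
  ∑ a, p a * Real.logb 2 (p a / q a)

/-- Binary entropy function. -/
def hb (x : ℝ) : ℝ := -(x * Real.logb 2 x) - (1 - x) * Real.logb 2 (1 - x)

/-- A (message-indexed) encoder is causal: its `j`-th output symbol depends only on the
first `j` state symbols. -/
def Causal {M A B : Type*} {n : ℕ} (e : M → (Fin n → A) → Fin n → B) : Prop :=
  ∀ m s s' j, (∀ i, i ≤ j → s i = s' i) → e m s j = e m s' j

/-- A strictly causal encoder: its `j`-th output symbol depends only on the state symbols
strictly before `j`. -/
def StrictlyCausal {M A B : Type*} {n : ℕ} (e : M → (Fin n → A) → Fin n → B) : Prop :=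
  ∀ m s s' j, (∀ i, i < j → s i = s' i) → e m s j = e m s' j

/-- A length-`n` two-sender code with message sets `Fin m1`, `Fin m2`: encoders map a
message and the state sequence to a channel-input sequence, and the decoder maps the
channel output sequence to a message pair. -/
structure Code2 (A1 A2 AS AY AZ : Type) (n m1 m2 : ℕ) where
  enc1 : Fin m1 → (Fin n → AS) → Fin n → A1
  enc2 : Fin m2 → (Fin n → AS) → Fin n → A2
  dec : (Fin n → AY) → Fin m1 × Fin m2

/-- Sample space carrying the auxiliary random variables `(V,U,U1,U2,X1,X2,S,Y,Z)`. -/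
abbrev O9 (V U U1 U2 A1 A2 AS AY AZ : Type) : Type :=
  V × U × U1 × U2 × A1 × A2 × AS × AY × AZ

namespace O9
variable {V U U1 U2 A1 A2 AS AY AZ : Type}
def v (ω : O9 V U U1 U2 A1 A2 AS AY AZ) : V := ω.1
def u (ω : O9 V U U1 U2 A1 A2 AS AY AZ) : U := ω.2.1
def u1 (ω : O9 V U U1 U2 A1 A2 AS AY AZ) : U1 := ω.2.2.1
def u2 (ω : O9 V U U1 U2 A1 A2 AS AY AZ) : U2 := ω.2.2.2.1
def x1 (ω : O9 V U U1 U2 A1 A2 AS AY AZ) : A1 := ω.2.2.2.2.1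
def x2 (ω : O9 V U U1 U2 A1 A2 AS AY AZ) : A2 := ω.2.2.2.2.2.1
def s (ω : O9 V U U1 U2 A1 A2 AS AY AZ) : AS := ω.2.2.2.2.2.2.1
def y (ω : O9 V U U1 U2 A1 A2 AS AY AZ) : AY := ω.2.2.2.2.2.2.2.1
def z (ω : O9 V U U1 U2 A1 A2 AS AY AZ) : AZ := ω.2.2.2.2.2.2.2.2
end O9

/-- Sample space carrying the auxiliary random variables `(U1,U2,X1,X2,S,Y,Z)`. -/
abbrev O7 (U1 U2 A1 A2 AS AY AZ : Type) : Type :=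
  U1 × U2 × A1 × A2 × AS × AY × AZ

namespace O7
variable {U1 U2 A1 A2 AS AY AZ : Type}
def u1 (ω : O7 U1 U2 A1 A2 AS AY AZ) : U1 := ω.1
def u2 (ω : O7 U1 U2 A1 A2 AS AY AZ) : U2 := ω.2.1
def x1 (ω : O7 U1 U2 A1 A2 AS AY AZ) : A1 := ω.2.2.1
def x2 (ω : O7 U1 U2 A1 A2 AS AY AZ) : A2 := ω.2.2.2.1
def s (ω : O7 U1 U2 A1 A2 AS AY AZ) : AS := ω.2.2.2.2.1
def y (ω : O7 U1 U2 A1 A2 AS AY AZ) : AY := ω.2.2.2.2.2.1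
def z (ω : O7 U1 U2 A1 A2 AS AY AZ) : AZ := ω.2.2.2.2.2.2
end O7

/-- An auxiliary joint law `P_S P_{V|S} P_U P_{U1|U} P_{U2|U} P_{X1|UU1S} P_{X2|UU2S}`
over arbitrary finite auxiliary alphabets. -/
structure AuxLawR1 (A1 A2 AS AY AZ : Type) [Fintype A1] [Fintype A2] [Fintype AS]
    [Fintype AY] [Fintype AZ] where
  V : Type
  U : Type
  U1 : Type
  U2 : Type
  [fV : Fintype V]
  [fU : Fintype U]
  [fU1 : Fintype U1]
  [fU2 : Fintype U2]
  [dV : DecidableEq V]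
  [dU : DecidableEq U]
  [dU1 : DecidableEq U1]
  [dU2 : DecidableEq U2]
  PV : AS → V → ℝ
  PU : U → ℝ
  PU1 : U → U1 → ℝ
  PU2 : U → U2 → ℝ
  PX1 : U → U1 → AS → A1 → ℝ
  PX2 : U → U2 → AS → A2 → ℝ
  hPV : IsKernel PV
  hPU : IsPmf PU
  hPU1 : IsKernel PU1
  hPU2 : IsKernel PU2
  hPX1 : ∀ u u1 s, IsPmf (PX1 u u1 s)
  hPX2 : ∀ u u2 s, IsPmf (PX2 u u2 s)

attribute [instance] AuxLawR1.fV AuxLawR1.fU AuxLawR1.fU1 AuxLawR1.fU2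
  AuxLawR1.dV AuxLawR1.dU AuxLawR1.dU1 AuxLawR1.dU2

/-- An auxiliary joint law `P_S P_{U1} P_{U2} P_{X1|U1S} P_{X2|U2S}` over arbitrary
finite auxiliary alphabets (for Coding scheme 2). -/
structure AuxLawR2 (A1 A2 AS AY AZ : Type) [Fintype A1] [Fintype A2] [Fintype AS]
    [Fintype AY] [Fintype AZ] where
  U1 : Type
  U2 : Type
  [fU1 : Fintype U1]
  [fU2 : Fintype U2]
  [dU1 : DecidableEq U1]
  [dU2 : DecidableEq U2]
  PU1 : U1 → ℝ
  PU2 : U2 → ℝ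
  PX1 : U1 → AS → A1 → ℝ
  PX2 : U2 → AS → A2 → ℝ
  hPU1 : IsPmf PU1
  hPU2 : IsPmf PU2
  hPX1 : ∀ u1 s, IsPmf (PX1 u1 s)
  hPX2 : ∀ u2 s, IsPmf (PX2 u2 s)

attribute [instance] AuxLawR2.fU1 AuxLawR2.fU2 AuxLawR2.dU1 AuxLawR2.dU2

variable {A1 A2 AS AY AZ : Type} [Fintype A1] [Fintype A2] [Fintype AS]
  [Fintype AY] [Fintype AZ] [DecidableEq A1] [DecidableEq A2] [DecidableEq AS]
  [DecidableEq AY] [DecidableEq AZ]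

/-- Joint distribution of (uniform independent) messages, the i.i.d. state sequence and
the memoryless channel outputs, induced by a code. -/
def jp2 (PS : AS → ℝ) (W : A1 → A2 → AS → AY × AZ → ℝ) {n m1 m2 : ℕ}
    (c : Code2 A1 A2 AS AY AZ n m1 m2) :
    Fin m1 × Fin m2 × (Fin n → AS) × (Fin n → AY) × (Fin n → AZ) → ℝ :=
  fun ω =>
    (m1 : ℝ)⁻¹ * (m2 : ℝ)⁻¹ * (∏ i, PS (ω.2.2.1 i)) *
      ∏ i, W (c.enc1 ω.1 ω.2.2.1 i) (c.enc2 ω.2.1 ω.2.2.1 i) (ω.2.2.1 i)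
        (ω.2.2.2.1 i, ω.2.2.2.2 i)

/-- Average probability of a decoding error. -/
def Perr2 (PS : AS → ℝ) (W : A1 → A2 → AS → AY × AZ → ℝ) {n m1 m2 : ℕ}
    (c : Code2 A1 A2 AS AY AZ n m1 m2) : ℝ :=
  ∑ ω, if c.dec ω.2.2.2.1 = (ω.1, ω.2.1) then 0 else jp2 PS W c ω

/-- Information leakage `I(M1,M2; Z^n)` to the eavesdropper. -/
def Leak2 (PS : AS → ℝ) (W : A1 → A2 → AS → AY × AZ → ℝ) {n m1 m2 : ℕ}
    (c : Code2 A1 A2 AS AY AZ n m1 m2) : ℝ :=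
  MI (jp2 PS W c) (fun ω => (ω.1, ω.2.1)) (fun ω => ω.2.2.2.2)

/-- `(R1,R2)` is achievable with causal CSI at both encoders under the strong secrecy
criterion. -/
def AchievableCSI (PS : AS → ℝ) (W : A1 → A2 → AS → AY × AZ → ℝ) (R : ℝ × ℝ) : Prop :=
  0 ≤ R.1 ∧ 0 ≤ R.2 ∧
    ∀ ε : ℝ, 0 < ε → ∃ n0 : ℕ, ∀ n : ℕ, n0 < n →
      ∃ c : Code2 A1 A2 AS AY AZ n ⌈(2 : ℝ) ^ ((n : ℝ) * R.1)⌉₊ ⌈(2 : ℝ) ^ ((n : ℝ) * R.2)⌉₊,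
        Causal c.enc1 ∧ Causal c.enc2 ∧ Perr2 PS W c ≤ ε ∧ Leak2 PS W c ≤ ε

/-- The strong-secrecy capacity region `C^{CSI-E}` (closure of the achievable pairs). -/
def CapCSIE (PS : AS → ℝ) (W : A1 → A2 → AS → AY × AZ → ℝ) : Set (ℝ × ℝ) :=
  closure {R | AchievableCSI PS W R}

section AuxR1
variable {V U U1 U2 : Type} [Fintype V] [Fintype U] [Fintype U1] [Fintype U2]
  [DecidableEq V] [DecidableEq U] [DecidableEq U1] [DecidableEq U2]

/-- The joint pmf `P_S P_{V|S} P_U P_{U1|U} P_{U2|U} P_{X1|UU1S} P_{X2|UU2S} W`. -/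
def jointR1 (PS : AS → ℝ) (W : A1 → A2 → AS → AY × AZ → ℝ) (PV : AS → V → ℝ)
    (PU : U → ℝ) (PU1 : U → U1 → ℝ) (PU2 : U → U2 → ℝ)
    (PX1 : U → U1 → AS → A1 → ℝ) (PX2 : U → U2 → AS → A2 → ℝ) :
    O9 V U U1 U2 A1 A2 AS AY AZ → ℝ :=
  fun ω => PS ω.s * PV ω.s ω.v * PU ω.u * PU1 ω.u ω.u1 * PU2 ω.u ω.u2 *
    PX1 ω.u ω.u1 ω.s ω.x1 * PX2 ω.u ω.u2 ω.s ω.x2 * W ω.x1 ω.x2 ω.s (ω.y, ω.z)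

/-- `R_SUM = min{I(U1,U2;Y|V,U), I(V,U,U1,U2;Y) - I(V;S)}`. -/
def Rsum (p : O9 V U U1 U2 A1 A2 AS AY AZ → ℝ) : ℝ :=
  min (cMI p (fun ω => (ω.u1, ω.u2)) (fun ω => ω.y) (fun ω => (ω.v, ω.u)))
    (MI p (fun ω => (ω.v, ω.u, ω.u1, ω.u2)) (fun ω => ω.y) -
      MI p (fun ω => ω.v) (fun ω => ω.s))

/-- The region `R_{11}`. -/
def regionR11 (p : O9 V U U1 U2 A1 A2 AS AY AZ → ℝ) : Set (ℝ × ℝ) :=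
  {R | 0 ≤ R.1 ∧ 0 ≤ R.2 ∧ ∃ r11 r21 : ℝ, 0 ≤ r11 ∧ 0 ≤ r21 ∧
    r11 + r21 ≤ MI p (fun ω => ω.v) (fun ω => ω.y) -
      MI p (fun ω => ω.v) (fun ω => (ω.u, ω.z)) ∧
    R.1 ≤ min (cMI p (fun ω => ω.u1) (fun ω => ω.y) (fun ω => (ω.v, ω.u, ω.u2)) -
        cMI p (fun ω => ω.u1) (fun ω => ω.z) (fun ω => (ω.s, ω.u)) + r11)
      (cMI p (fun ω => ω.u1) (fun ω => ω.y) (fun ω => (ω.v, ω.u, ω.u2))) ∧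
    R.2 ≤ min (cMI p (fun ω => ω.u2) (fun ω => ω.y) (fun ω => (ω.v, ω.u, ω.u1)) -
        cMI p (fun ω => ω.u2) (fun ω => ω.z) (fun ω => (ω.s, ω.u)) + r21)
      (cMI p (fun ω => ω.u2) (fun ω => ω.y) (fun ω => (ω.v, ω.u, ω.u1))) ∧
    R.1 + R.2 ≤ min (Rsum p -
        cMI p (fun ω => (ω.u1, ω.u2)) (fun ω => ω.z) (fun ω => (ω.s, ω.u)) + r11 + r21)
      (Rsum p)}

/-- The region `R_{12}` (wiretap coding not available at Encoder 1). -/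
def regionR12 (p : O9 V U U1 U2 A1 A2 AS AY AZ → ℝ) : Set (ℝ × ℝ) :=
  {R | 0 ≤ R.1 ∧ 0 ≤ R.2 ∧ ∃ r11 r21 : ℝ, 0 ≤ r11 ∧ 0 ≤ r21 ∧
    r11 + r21 ≤ MI p (fun ω => ω.v) (fun ω => ω.y) -
      MI p (fun ω => ω.v) (fun ω => (ω.z, ω.u, ω.u1)) ∧
    R.1 ≤ min (cMI p (fun ω => ω.u1) (fun ω => ω.y) (fun ω => (ω.v, ω.u, ω.u2))) r11 ∧
    R.2 ≤ min (cMI p (fun ω => ω.u2) (fun ω => ω.y) (fun ω => (ω.v, ω.u, ω.u1)) -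
        cMI p (fun ω => ω.u2) (fun ω => ω.z) (fun ω => (ω.s, ω.u, ω.u1)) + r21)
      (cMI p (fun ω => ω.u2) (fun ω => ω.y) (fun ω => (ω.v, ω.u, ω.u1))) ∧
    R.1 + R.2 ≤ min (min (Rsum p)
        (Rsum p - cMI p (fun ω => ω.u2) (fun ω => ω.z) (fun ω => (ω.s, ω.u, ω.u1)) + r21))
      (cMI p (fun ω => ω.u2) (fun ω => ω.y) (fun ω => (ω.v, ω.u, ω.u1)) -
        cMI p (fun ω => ω.u2) (fun ω => ω.z) (fun ω => (ω.s, ω.u, ω.u1)) + r11 + r21)}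

/-- The region `R_{13}` (wiretap coding not available at Encoder 2). -/
def regionR13 (p : O9 V U U1 U2 A1 A2 AS AY AZ → ℝ) : Set (ℝ × ℝ) :=
  {R | 0 ≤ R.1 ∧ 0 ≤ R.2 ∧ ∃ r11 r21 : ℝ, 0 ≤ r11 ∧ 0 ≤ r21 ∧
    r11 + r21 ≤ MI p (fun ω => ω.v) (fun ω => ω.y) -
      MI p (fun ω => ω.v) (fun ω => (ω.z, ω.u, ω.u2)) ∧
    R.1 ≤ min (cMI p (fun ω => ω.u1) (fun ω => ω.y) (fun ω => (ω.v, ω.u, ω.u2)) -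
        cMI p (fun ω => ω.u1) (fun ω => ω.z) (fun ω => (ω.s, ω.u, ω.u2)) + r11)
      (cMI p (fun ω => ω.u1) (fun ω => ω.y) (fun ω => (ω.v, ω.u, ω.u2))) ∧
    R.2 ≤ min (cMI p (fun ω => ω.u2) (fun ω => ω.y) (fun ω => (ω.v, ω.u, ω.u1))) r21 ∧
    R.1 + R.2 ≤ min (min (Rsum p)
        (Rsum p - cMI p (fun ω => ω.u1) (fun ω => ω.z) (fun ω => (ω.s, ω.u, ω.u2)) + r11))
      (cMI p (fun ω => ω.u1) (fun ω => ω.y) (fun ω => (ω.v, ω.u, ω.u2)) -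
        cMI p (fun ω => ω.u1) (fun ω => ω.z) (fun ω => (ω.s, ω.u, ω.u2)) + r11 + r21)}

end AuxR1

/-- The joint law determined by an auxiliary-law datum. -/
def AuxLawR1.joint (L : AuxLawR1 A1 A2 AS AY AZ) (PS : AS → ℝ)
    (W : A1 → A2 → AS → AY × AZ → ℝ) : O9 L.V L.U L.U1 L.U2 A1 A2 AS AY AZ → ℝ :=
  jointR1 PS W L.PV L.PU L.PU1 L.PU2 L.PX1 L.PX2

/-- The region `R_1` of Theorem 2: the convex hull of the union, over all auxiliary
joint laws, of `R_{11} ∪ R_{12} ∪ R_{13}`. -/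
def RegionR1 (PS : AS → ℝ) (W : A1 → A2 → AS → AY × AZ → ℝ) : Set (ℝ × ℝ) :=
  convexHull ℝ {R | ∃ L : AuxLawR1 A1 A2 AS AY AZ,
    R ∈ regionR11 (L.joint PS W) ∪ regionR12 (L.joint PS W) ∪ regionR13 (L.joint PS W)}

section AuxR2
variable {U1 U2 : Type} [Fintype U1] [Fintype U2] [DecidableEq U1] [DecidableEq U2]

/-- The joint pmf `P_S P_{U1} P_{U2} P_{X1|U1S} P_{X2|U2S} W`. -/
def jointR2 (PS : AS → ℝ) (W : A1 → A2 → AS → AY × AZ → ℝ) (PU1 : U1 → ℝ)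
    (PU2 : U2 → ℝ) (PX1 : U1 → AS → A1 → ℝ) (PX2 : U2 → AS → A2 → ℝ) :
    O7 U1 U2 A1 A2 AS AY AZ → ℝ :=
  fun ω => PS ω.s * PU1 ω.u1 * PU2 ω.u2 * PX1 ω.u1 ω.s ω.x1 * PX2 ω.u2 ω.s ω.x2 *
    W ω.x1 ω.x2 ω.s (ω.y, ω.z)

/-- The region `R_{21}`. -/
def regionR21 (p : O7 U1 U2 A1 A2 AS AY AZ → ℝ) : Set (ℝ × ℝ) :=
  {R | 0 ≤ R.1 ∧ 0 ≤ R.2 ∧ ∃ r11 r12 r21 r22 : ℝ,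
    0 ≤ r11 ∧ 0 ≤ r12 ∧ 0 ≤ r21 ∧ 0 ≤ r22 ∧
    r11 + r12 + r21 + r22 ≤ Hc p (fun ω => ω.s) (fun ω => ω.z) ∧
    Hc p (fun ω => ω.s) (fun ω => (ω.y, ω.u1, ω.u2)) ≤ r12 + r22 ∧
    R.1 ≤ min (cMI p (fun ω => ω.u1) (fun ω => ω.y) (fun ω => ω.u2) -
        cMI p (fun ω => ω.u1) (fun ω => ω.z) (fun ω => ω.s) + r11)
      (cMI p (fun ω => ω.u1) (fun ω => ω.y) (fun ω => ω.u2) - r12) ∧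
    R.2 ≤ min (cMI p (fun ω => ω.u2) (fun ω => ω.y) (fun ω => ω.u1) -
        cMI p (fun ω => ω.u2) (fun ω => ω.z) (fun ω => ω.s) + r21)
      (cMI p (fun ω => ω.u2) (fun ω => ω.y) (fun ω => ω.u1) - r22) ∧
    R.1 + R.2 ≤ min (MI p (fun ω => (ω.u1, ω.u2)) (fun ω => ω.y) -
        cMI p (fun ω => (ω.u1, ω.u2)) (fun ω => ω.z) (fun ω => ω.s) +
        Hc p (fun ω => ω.s) (fun ω => ω.z) -
        Hc p (fun ω => ω.s) (fun ω => (ω.u1, ω.u2, ω.y)))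
      (MI p (fun ω => (ω.u1, ω.u2)) (fun ω => ω.y) -
        Hc p (fun ω => ω.s) (fun ω => (ω.u1, ω.u2, ω.y)))}

/-- The region `R_{22}` (wiretap coding not available at Encoder 1). -/
def regionR22 (p : O7 U1 U2 A1 A2 AS AY AZ → ℝ) : Set (ℝ × ℝ) :=
  {R | 0 ≤ R.1 ∧ 0 ≤ R.2 ∧ ∃ r11 r12 r21 r22 : ℝ,
    0 ≤ r11 ∧ 0 ≤ r12 ∧ 0 ≤ r21 ∧ 0 ≤ r22 ∧
    r11 + r12 + r21 + r22 ≤ Hc p (fun ω => ω.s) (fun ω => (ω.z, ω.u1)) ∧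
    Hc p (fun ω => ω.s) (fun ω => (ω.y, ω.u1, ω.u2)) ≤ r12 + r22 ∧
    R.1 ≤ min r11 (cMI p (fun ω => ω.u1) (fun ω => ω.y) (fun ω => ω.u2) - r12) ∧
    R.2 ≤ min (cMI p (fun ω => ω.u2) (fun ω => ω.y) (fun ω => ω.u1) -
        cMI p (fun ω => ω.u2) (fun ω => ω.z) (fun ω => (ω.s, ω.u1)) + r21)
      (cMI p (fun ω => ω.u2) (fun ω => ω.y) (fun ω => ω.u1) - r22) ∧
    R.1 + R.2 ≤ min (cMI p (fun ω => ω.u2) (fun ω => ω.y) (fun ω => ω.u1) -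
        cMI p (fun ω => ω.u2) (fun ω => ω.z) (fun ω => (ω.s, ω.u1)) +
        Hc p (fun ω => ω.s) (fun ω => (ω.z, ω.u1)) -
        Hc p (fun ω => ω.s) (fun ω => (ω.u1, ω.u2, ω.y)))
      (MI p (fun ω => (ω.u1, ω.u2)) (fun ω => ω.y) -
        Hc p (fun ω => ω.s) (fun ω => (ω.u1, ω.u2, ω.y)))}

/-- The region `R_{23}` (wiretap coding not available at Encoder 2). -/
def regionR23 (p : O7 U1 U2 A1 A2 AS AY AZ → ℝ) : Set (ℝ × ℝ) :=
  {R | 0 ≤ R.1 ∧ 0 ≤ R.2 ∧ ∃ r11 r12 r21 r22 : ℝ,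
    0 ≤ r11 ∧ 0 ≤ r12 ∧ 0 ≤ r21 ∧ 0 ≤ r22 ∧
    r11 + r12 + r21 + r22 ≤ Hc p (fun ω => ω.s) (fun ω => (ω.z, ω.u2)) ∧
    Hc p (fun ω => ω.s) (fun ω => (ω.y, ω.u1, ω.u2)) ≤ r12 + r22 ∧
    R.1 ≤ min (cMI p (fun ω => ω.u1) (fun ω => ω.y) (fun ω => ω.u2) -
        cMI p (fun ω => ω.u1) (fun ω => ω.z) (fun ω => (ω.s, ω.u2)) + r11)
      (cMI p (fun ω => ω.u1) (fun ω => ω.y) (fun ω => ω.u2) - r12) ∧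
    R.2 ≤ min r21 (cMI p (fun ω => ω.u2) (fun ω => ω.y) (fun ω => ω.u1) - r22) ∧
    R.1 + R.2 ≤ min (cMI p (fun ω => ω.u1) (fun ω => ω.y) (fun ω => ω.u2) -
        cMI p (fun ω => ω.u1) (fun ω => ω.z) (fun ω => (ω.s, ω.u2)) +
        Hc p (fun ω => ω.s) (fun ω => (ω.z, ω.u2)) -
        Hc p (fun ω => ω.s) (fun ω => (ω.u1, ω.u2, ω.y)))
      (MI p (fun ω => (ω.u1, ω.u2)) (fun ω => ω.y) -
        Hc p (fun ω => ω.s) (fun ω => (ω.u1, ω.u2, ω.y)))}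

end AuxR2

/-- The joint law determined by an auxiliary-law datum for Coding scheme 2. -/
def AuxLawR2.joint (L : AuxLawR2 A1 A2 AS AY AZ) (PS : AS → ℝ)
    (W : A1 → A2 → AS → AY × AZ → ℝ) : O7 L.U1 L.U2 A1 A2 AS AY AZ → ℝ :=
  jointR2 PS W L.PU1 L.PU2 L.PX1 L.PX2

/-- The region `R_2` of Theorem 2: the convex hull of the union, over all auxiliary
joint laws, of `R_{21} ∪ R_{22} ∪ R_{23}`. -/
def RegionR2 (PS : AS → ℝ) (W : A1 → A2 → AS → AY × AZ → ℝ) : Set (ℝ × ℝ) :=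
  convexHull ℝ {R | ∃ L : AuxLawR2 A1 A2 AS AY AZ,
    R ∈ regionR21 (L.joint PS W) ∪ regionR22 (L.joint PS W) ∪ regionR23 (L.joint PS W)}

/-- The Bernoulli(`p`) state pmf on `Bool` (`true` has probability `p`). -/
def PSp (p : ℝ) : Bool → ℝ := fun s => if s then p else 1 - p

/-- The deterministic channel of Example 1, first model: `Y = X1` if `S = 0`, `Y = X2`
if `S = 1`, and `Z = X2`. -/
def Wex1 : Bool → Bool → Bool → Bool × Bool → ℝ :=
  fun x1 x2 s yz => if yz.1 = cond s x2 x1 ∧ yz.2 = x2 then 1 else 0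

open scoped Finset

section Laws

variable {Ω Ω' α β : Type*} [Fintype Ω] [Fintype Ω'] [DecidableEq α] [DecidableEq β]

lemma sum_law_mul [Fintype α] (p : Ω → ℝ) (X : Ω → α) (f : α → ℝ) :
    ∑ a, law p X a * f a = ∑ ω, p ω * f (X ω) := by
  simp only [law, Finset.sum_mul, ite_mul, zero_mul]
  rw [Finset.sum_comm]
  simp

lemma sum_law_pair_left [Fintype α] (p : Ω → ℝ) (X : Ω → α) (Y : Ω → β) (b : β) :
    ∑ a, law p (fun ω => (X ω, Y ω)) (a, b) = law p Y b := by
  simp only [law, Prod.mk.injEq, ite_and]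
  rw [Finset.sum_comm]
  simp

lemma sum_law_pair_right [Fintype β] (p : Ω → ℝ) (X : Ω → α) (Y : Ω → β) (a : α) :
    ∑ b, law p (fun ω => (X ω, Y ω)) (a, b) = law p X a := by
  simp only [law, Prod.mk.injEq, and_comm (a := X _ = a), ite_and]
  rw [Finset.sum_comm]
  simp

lemma law_eq_law_comp_of_injective {f : Ω → Ω'} (hf : f.Injective) {p : Ω' → ℝ}
    (hp : ∀ ω ∉ Set.range f, p ω = 0) (X : Ω' → α) :
    law p X = law (p ∘ f) (X ∘ f) := by
  funext a
  exact (Fintype.sum_of_injective f hf _ _ (by simp +contextual [hp]) fun _ => rfl).symm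

end Laws

section Entropy

variable {Ω α β : Type*} [Fintype Ω] [Fintype α] [Fintype β] [DecidableEq α] [DecidableEq β]

lemma H_eq_sum (p : Ω → ℝ) (X : Ω → α) :
    H p X = -∑ ω, p ω * Real.logb 2 (law p X (X ω)) := by
  rw [H, ent, sum_law_mul p X fun a => Real.logb 2 (law p X a)]

lemma H_congr (p : Ω → ℝ) {X : Ω → α} {Y : Ω → β}
    (h : ∀ ω ω', X ω = X ω' ↔ Y ω = Y ω') : H p X = H p Y := by
  simp only [H_eq_sum, law, h]

lemma H_eq_neg_logb_of_law_eq {p : Ω → ℝ} (hp : ∑ ω, p ω = 1) {X : Ω → α} {c : ℝ}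
    (hX : ∀ ω, law p X (X ω) = c) : H p X = -Real.logb 2 c := by
  simp only [H_eq_sum, hX, ← Finset.sum_mul, hp, one_mul]

lemma mul_logb_mul (b x y : ℝ) :
    x * y * Real.logb b (x * y) = x * y * Real.logb b x + x * y * Real.logb b y := by
  rcases eq_or_ne x 0 with rfl | hx
  · simp
  rcases eq_or_ne y 0 with rfl | hy
  · simp
  rw [Real.logb_mul hx hy, mul_add]

omit [DecidableEq α] [DecidableEq β] in
lemma ent_mul_kernel (p : α → ℝ) {k : α → β → ℝ} (hk : ∀ a, ∑ b, k a b = 1) :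
    ent (fun t : α × β => p t.1 * k t.1 t.2) = ent p + ∑ a, p a * ent (k a) := by
  simp only [ent, Fintype.sum_prod_type, mul_logb_mul, Finset.sum_add_distrib, mul_neg,
    Finset.sum_neg_distrib, neg_add]
  congr 2
  · refine Finset.sum_congr rfl fun a _ => ?_
    rw [← Finset.sum_mul, ← Finset.mul_sum, hk, mul_one]
  · simp only [Finset.mul_sum, mul_assoc]

end Entropy

section UniformNoise

variable {σ ν α : Type*} [Fintype σ] [Fintype ν] [Fintype α] [DecidableEq α]

/-- The law of a pair `(S, N)` in which `S` has law `P` and the noise `N` is uniform on `ν` and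
independent of `S`. -/
def withUniformNoise (P : σ → ℝ) (ν : Type*) [Fintype ν] : σ × ν → ℝ :=
  fun t => P t.1 / Fintype.card ν

lemma sum_withUniformNoise [Nonempty ν] (P : σ → ℝ) :
    ∑ t, withUniformNoise P ν t = ∑ s, P s := by
  simp [withUniformNoise, Fintype.sum_prod_type, mul_div_cancel₀]

omit [Fintype α] in
lemma law_withUniformNoise_apply [Nonempty ν] (P : σ → ℝ) {X : σ × ν → α} {t : σ × ν} {n : ℕ}
    (hS : ∀ t', X t' = X t → t'.1 = t.1)
    (hX : #{t' | X t' = X t} * 2 ^ n = Fintype.card ν) :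
    law (withUniformNoise P ν) X (X t) = P t.1 * (2 ^ n)⁻¹ := by
  have hν : (Fintype.card ν : ℝ) ≠ 0 := by simp
  rw [law, ← Finset.sum_filter, Finset.sum_congr rfl (g := fun _ => P t.1 / Fintype.card ν)
    (by simp +contextual [withUniformNoise, hS]), Finset.sum_const, nsmul_eq_mul]
  field_simp
  rw [mul_right_comm, mul_comm]
  exact_mod_cast congrArg (fun m : ℕ => P t.1 * m) hX

/-- If `X` determines `S` and, when `S = s`, cuts the noise alphabet down by the factor
`2 ^ n s`, then it carries `n s` bits of noise in that state. -/
lemma H_withUniformNoise [Nonempty ν] (P : σ → ℝ) {X : σ × ν → α} {n : σ → ℕ}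
    (hS : ∀ t t', X t' = X t → t'.1 = t.1)
    (hX : ∀ t, #{t' | X t' = X t} * 2 ^ n t.1 = Fintype.card ν) :
    H (withUniformNoise P ν) X = ent P + ∑ s, P s * n s := by
  have hterm (s : σ) : P s * Real.logb 2 (P s * (2 ^ n s)⁻¹) =
      P s * Real.logb 2 (P s) - P s * n s := by
    rcases eq_or_ne (P s) 0 with h | h
    · simp [h]
    · rw [Real.logb_mul h (by positivity), Real.logb_inv, Real.logb_pow,
        Real.logb_self_eq_one one_lt_two]
      ring
  have hν : (Fintype.card ν : ℝ) ≠ 0 := by simp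
  simp only [H_eq_sum, law_withUniformNoise_apply P (hS _) (hX _), withUniformNoise,
    Fintype.sum_prod_type, Finset.sum_const, Finset.card_univ, nsmul_eq_mul, ← mul_assoc,
    mul_div_cancel₀ _ hν, hterm, Finset.sum_sub_distrib, ent]
  ring

/-- The count does not depend on the state `s`, so `X` is independent of `S`. -/
lemma H_withUniformNoise_of_indep [Nonempty ν] {P : σ → ℝ} (hP : ∑ s, P s = 1)
    {X : σ × ν → α} {n : ℕ}
    (hX : ∀ t s, #{m | X (s, m) = X t} * 2 ^ n = Fintype.card ν) :
    H (withUniformNoise P ν) X = n := by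
  have hν : (Fintype.card ν : ℝ) ≠ 0 := by simp
  have hcount (t : σ × ν) (s : σ) :
      (#{m | X (s, m) = X t} : ℝ) * (P s / Fintype.card ν) = P s * (2 ^ n)⁻¹ := by
    rw [← hX t s] at hν ⊢
    push_cast at hν ⊢
    have := left_ne_zero_of_mul hν
    field_simp
  have hlaw (t : σ × ν) : law (withUniformNoise P ν) X (X t) = (2 ^ n)⁻¹ := by
    rw [law, Fintype.sum_prod_type]
    simp only [withUniformNoise, ← Finset.sum_filter, Finset.sum_const, nsmul_eq_mul, hcount,
      ← Finset.sum_mul, hP, one_mul]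
  rw [H_eq_neg_logb_of_law_eq ((sum_withUniformNoise P).trans hP) hlaw, Real.logb_inv,
    Real.logb_pow, Real.logb_self_eq_one one_lt_two]
  ring

end UniformNoise

section BinaryEntropy

open Filter Topology

lemma ent_PSp (p : ℝ) : ent (PSp p) = hb p := by
  simp only [ent, PSp, hb, Fintype.sum_bool, if_true, Bool.false_eq_true, if_false]
  ring

lemma hb_eq_binEntropy_div_log (p : ℝ) : hb p = Real.binEntropy p / Real.log 2 := by
  simp only [hb, Real.binEntropy, Real.logb, Real.log_inv]
  ring

lemma hb_le_one (p : ℝ) : hb p ≤ 1 := by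
  rw [hb_eq_binEntropy_div_log, div_le_one (Real.log_pos one_lt_two)]
  exact Real.binEntropy_le_log_two

lemma continuous_hb : Continuous hb := by
  simp only [funext hb_eq_binEntropy_div_log]
  fun_prop

lemma eventually_hb_lt_self : ∀ᶠ p in 𝓝 1, hb p < p :=
  continuous_hb.continuousAt.eventually_lt continuousAt_id (by simp [hb])

end BinaryEntropy

section FairInputs

/-- The admissible law behind Coding scheme 1: `V = S`, `U` is constant, and `X1 = U1`, `X2 = U2`
are independent fair bits. -/
abbrev fairInputs : AuxLawR1 Bool Bool Bool Bool Bool where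
  V := Bool
  U := Unit
  U1 := Bool
  U2 := Bool
  PV := fun s v => if v = s then 1 else 0
  PU := fun _ => 1
  PU1 := fun _ _ => 1 / 2
  PU2 := fun _ _ => 1 / 2
  PX1 := fun _ u1 _ x => if x = u1 then 1 else 0
  PX2 := fun _ u2 _ x => if x = u2 then 1 else 0
  hPV := fun s => ⟨fun v => by positivity, by simp⟩
  hPU := ⟨fun _ => by positivity, by simp⟩
  hPU1 := fun _ => ⟨fun _ => by positivity, by simp⟩
  hPU2 := fun _ => ⟨fun _ => by positivity, by simp⟩
  hPX1 := fun _ _ _ => ⟨fun _ => by positivity, by simp⟩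
  hPX2 := fun _ _ _ => ⟨fun _ => by positivity, by simp⟩

/-- The sample space of all nine variables under `fairInputs`. -/
abbrev FairSpace : Type := O9 Bool Unit Bool Bool Bool Bool Bool Bool Bool

/-- The joint law of all nine variables under `fairInputs`. -/
def fairLaw (p : ℝ) : FairSpace → ℝ :=
  fairInputs.joint (PSp p) Wex1

/-- The nine variables as functions of the state `S` and the noise `(U1, U2)`. -/
def fairOutcome (t : Bool × Bool × Bool) : FairSpace :=
  (t.1, (), t.2.1, t.2.2, t.2.1, t.2.2, t.1, cond t.1 t.2.2 t.2.1, t.2.2)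

lemma fairOutcome_injective : fairOutcome.Injective := by
  rintro ⟨s, a, b⟩ ⟨s', a', b'⟩ h
  simp_all [fairOutcome]

lemma fairLaw_comp_fairOutcome (p : ℝ) :
    fairLaw p ∘ fairOutcome = withUniformNoise (PSp p) (Bool × Bool) := by
  funext t
  simp only [fairLaw, AuxLawR1.joint, jointR1, Wex1, fairOutcome, withUniformNoise,
    Function.comp_apply, O9.v, O9.u1, O9.u2, O9.x1, O9.x2, O9.s, O9.y, O9.z, and_self, if_true,
    mul_one, Fintype.card_prod, Fintype.card_bool]
  push_cast
  ring

lemma fairLaw_eq_zero_of_notMem_range (p : ℝ)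
    {ω : FairSpace} (hω : ω ∉ Set.range fairOutcome) :
    fairLaw p ω = 0 := by
  obtain ⟨v, u, u1, u2, x1, x2, s, y, z⟩ := ω
  contrapose! hω
  obtain ⟨⟨⟨⟨⟨⟨⟨-, hv⟩, -⟩, -⟩, -⟩, hx1⟩, hx2⟩, hyz⟩ := by
    simpa only [fairLaw, AuxLawR1.joint, jointR1, Wex1, ← ne_eq, mul_ne_zero_iff] using hω
  obtain ⟨rfl, rfl⟩ : y = cond s x2 x1 ∧ z = x2 := (ite_ne_right_iff.1 hyz).1
  obtain rfl : v = s := (ite_ne_right_iff.1 hv).1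
  obtain rfl : x1 = u1 := (ite_ne_right_iff.1 hx1).1
  obtain rfl : z = u2 := (ite_ne_right_iff.1 hx2).1
  exact ⟨(v, x1, z), rfl⟩

lemma H_fairLaw_eq {α : Type*} [Fintype α] [DecidableEq α] (p : ℝ)
    (X : FairSpace → α) :
    H (fairLaw p) X =
      H (withUniformNoise (PSp p) (Bool × Bool)) (fun t => X (fairOutcome t)) := by
  rw [H, law_eq_law_comp_of_injective fairOutcome_injective
    fun _ => fairLaw_eq_zero_of_notMem_range p, fairLaw_comp_fairOutcome]
  rfl

/-- If `X` determines `S`, it carries `n₀` of the two fair bits when `S = 0` and `n₁` of them when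
`S = 1`. -/
lemma H_fairLaw {α : Type*} [Fintype α] [DecidableEq α] (p : ℝ)
    {X : FairSpace → α} (n₀ n₁ : ℕ)
    (hS : ∀ t t', X (fairOutcome t') = X (fairOutcome t) → t'.1 = t.1)
    (hX : ∀ t, #{t' | X (fairOutcome t') = X (fairOutcome t)} * 2 ^ cond t.1 n₁ n₀ = 4) :
    H (fairLaw p) X = hb p + ((1 - p) * n₀ + p * n₁) := by
  rw [H_fairLaw_eq, H_withUniformNoise (n := fun s => cond s n₁ n₀) _ hS hX, ent_PSp]
  simp [PSp, add_comm]

lemma H_fairLaw_of_indep {α : Type*} [Fintype α] [DecidableEq α] (p : ℝ)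
    {X : FairSpace → α} (n : ℕ)
    (hX : ∀ t s, #{m | X (fairOutcome (s, m)) = X (fairOutcome t)} * 2 ^ n = 4) :
    H (fairLaw p) X = n := by
  rw [H_fairLaw_eq, H_withUniformNoise_of_indep (by simp [PSp]) hX]

lemma MI_v_y_fairLaw (p : ℝ) : MI (fairLaw p) (fun ω => ω.v) (fun ω => ω.y) = 0 := by
  rw [MI, H_fairLaw p 0 0 (by decide) (by decide), H_fairLaw_of_indep p 1 (by decide),
    H_fairLaw p 1 1 (by decide) (by decide)]
  push_cast
  ring

lemma MI_v_zuu2_fairLaw (p : ℝ) :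
    MI (fairLaw p) (fun ω => ω.v) (fun ω => (ω.z, ω.u, ω.u2)) = 0 := by
  rw [MI, H_fairLaw p 0 0 (by decide) (by decide), H_fairLaw_of_indep p 1 (by decide),
    H_fairLaw p 1 1 (by decide) (by decide)]
  push_cast
  ring

lemma cMI_u1_y_fairLaw (p : ℝ) :
    cMI (fairLaw p) (fun ω => ω.u1) (fun ω => ω.y) (fun ω => (ω.v, ω.u, ω.u2)) = 1 - p := by
  rw [cMI, Hc, Hc, H_fairLaw p 2 2 (by decide) (by decide),
    H_fairLaw p 1 1 (by decide) (by decide), H_fairLaw p 2 2 (by decide) (by decide),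
    H_fairLaw p 2 1 (by decide) (by decide)]
  push_cast
  ring

lemma cMI_u1_z_fairLaw (p : ℝ) :
    cMI (fairLaw p) (fun ω => ω.u1) (fun ω => ω.z) (fun ω => (ω.s, ω.u, ω.u2)) = 0 := by
  rw [cMI, Hc, Hc, H_fairLaw p 2 2 (by decide) (by decide),
    H_fairLaw p 1 1 (by decide) (by decide), H_fairLaw p 2 2 (by decide) (by decide),
    H_fairLaw p 1 1 (by decide) (by decide)]
  push_cast
  ring

lemma cMI_u2_y_fairLaw (p : ℝ) :
    cMI (fairLaw p) (fun ω => ω.u2) (fun ω => ω.y) (fun ω => (ω.v, ω.u, ω.u1)) = p := by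
  rw [cMI, Hc, Hc, H_fairLaw p 2 2 (by decide) (by decide),
    H_fairLaw p 1 1 (by decide) (by decide), H_fairLaw p 2 2 (by decide) (by decide),
    H_fairLaw p 1 2 (by decide) (by decide)]
  push_cast
  ring

lemma cMI_u1u2_y_fairLaw (p : ℝ) :
    cMI (fairLaw p) (fun ω => (ω.u1, ω.u2)) (fun ω => ω.y) (fun ω => (ω.v, ω.u)) = 1 := by
  rw [cMI, Hc, Hc, H_fairLaw p 2 2 (by decide) (by decide),
    H_fairLaw p 0 0 (by decide) (by decide), H_fairLaw p 2 2 (by decide) (by decide),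
    H_fairLaw p 1 1 (by decide) (by decide)]
  push_cast
  ring

lemma MI_vuu1u2_y_fairLaw (p : ℝ) :
    MI (fairLaw p) (fun ω => (ω.v, ω.u, ω.u1, ω.u2)) (fun ω => ω.y) = 1 := by
  rw [MI, H_fairLaw p 2 2 (by decide) (by decide), H_fairLaw_of_indep p 1 (by decide),
    H_fairLaw p 2 2 (by decide) (by decide)]
  push_cast
  ring

lemma MI_v_s_fairLaw (p : ℝ) : MI (fairLaw p) (fun ω => ω.v) (fun ω => ω.s) = hb p := by
  rw [MI, H_fairLaw p 0 0 (by decide) (by decide), H_fairLaw p 0 0 (by decide) (by decide),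
    H_fairLaw p 0 0 (by decide) (by decide)]
  push_cast
  ring

theorem mem_regionR13_fairLaw {p : ℝ} (hp0 : 0 ≤ p) (hp1 : p ≤ 1) :
    (min (1 - p) (1 - hb p), (0 : ℝ)) ∈ regionR13 (fairLaw p) := by
  have hsum : Rsum (fairLaw p) = min 1 (1 - hb p) := by
    rw [Rsum, cMI_u1u2_y_fairLaw, MI_vuu1u2_y_fairLaw, MI_v_s_fairLaw]
  have hle : min (1 - p) (1 - hb p) ≤ min 1 (1 - hb p) := min_le_min_right _ (by linarith)
  refine ⟨le_min (by linarith) (by linarith [hb_le_one p]), le_rfl, 0, 0, le_rfl, le_rfl, ?_⟩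
  simp [MI_v_y_fairLaw, MI_v_zuu2_fairLaw, cMI_u1_y_fairLaw, cMI_u1_z_fairLaw, cMI_u2_y_fairLaw,
    hsum, hle, hp0]

theorem mem_RegionR1_Wex1 {p : ℝ} (hp0 : 0 ≤ p) (hp1 : p ≤ 1) :
    (min (1 - p) (1 - hb p), (0 : ℝ)) ∈ RegionR1 (PSp p) Wex1 :=
  subset_convexHull ℝ _ ⟨fairInputs, Or.inr (mem_regionR13_fairLaw hp0 hp1)⟩

end FairInputs

section Divergence

variable {α β : Type*} [Fintype α] [Fintype β]

lemma isPmf_mix {p : ℝ} (hp0 : 0 ≤ p) (hp1 : p ≤ 1) {f g : α → ℝ}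
    (hf : IsPmf f) (hg : IsPmf g) : IsPmf fun a => (1 - p) * f a + p * g a :=
  ⟨fun a => add_nonneg (mul_nonneg (sub_nonneg.2 hp1) (hf.1 a)) (mul_nonneg hp0 (hg.1 a)), by
    rw [Finset.sum_add_distrib, ← Finset.mul_sum, ← Finset.mul_sum, hf.2, hg.2]
    ring⟩

lemma KL_eq_neg_ent_sub (p : β → ℝ) {r : β → ℝ} (hr : ∀ b, 0 < r b) :
    KL p r = -ent p - ∑ b, p b * Real.logb 2 (r b) := by
  rw [KL, ent, neg_neg, ← Finset.sum_sub_distrib]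
  refine Finset.sum_congr rfl fun b _ => ?_
  rcases eq_or_ne (p b) 0 with h | h
  · simp [h]
  · rw [Real.logb_div h (hr b).ne', mul_sub]

lemma KL_nonneg {p r : β → ℝ} (hp : IsPmf p) (hr : IsPmf r) (hr' : ∀ b, 0 < r b) :
    0 ≤ KL p r := by
  have hterm (b : β) : (p b - r b) / Real.log 2 ≤ p b * Real.logb 2 (p b / r b) := by
    rcases (hp.1 b).eq_or_lt with h | h
    · have := hr' b
      rw [← h, zero_mul, zero_sub]
      exact div_nonpos_of_nonpos_of_nonneg (by linarith) (Real.log_pos one_lt_two).le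
    · rw [Real.logb, ← mul_div_assoc]
      gcongr
      calc p b - r b = p b * (1 - (p b / r b)⁻¹) := by field_simp
        _ ≤ p b * Real.log (p b / r b) :=
          mul_le_mul_of_nonneg_left (Real.one_sub_inv_le_log_of_pos (div_pos h (hr' b))) h.le
  calc (0 : ℝ) = ∑ b, (p b - r b) / Real.log 2 := by
        rw [← Finset.sum_div, Finset.sum_sub_distrib, hp.2, hr.2, sub_self, zero_div]
    _ ≤ KL p r := Finset.sum_le_sum fun b _ => hterm b

lemma KL_le_chiSq {p r : β → ℝ} (hp : IsPmf p) (hr : IsPmf r) (hr' : ∀ b, 0 < r b) :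
    KL p r ≤ (∑ b, (p b - r b) ^ 2 / r b) / Real.log 2 := by
  have hterm (b : β) : p b * Real.logb 2 (p b / r b) ≤ p b * (p b / r b - 1) / Real.log 2 := by
    rcases (hp.1 b).eq_or_lt with h | h
    · simp [← h]
    · rw [Real.logb, ← mul_div_assoc]
      gcongr
      exact Real.log_le_sub_one_of_pos (div_pos h (hr' b))
  have hsq (b : β) : p b * (p b / r b - 1) = (p b - r b) ^ 2 / r b + (p b - r b) := by
    have := (hr' b).ne'
    field_simp
    ring
  calc KL p r ≤ ∑ b, p b * (p b / r b - 1) / Real.log 2 := Finset.sum_le_sum fun b _ => hterm b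
    _ = (∑ b, (p b - r b) ^ 2 / r b) / Real.log 2 := by
      simp only [← Finset.sum_div, hsq, Finset.sum_add_distrib, Finset.sum_sub_distrib, hp.2,
        hr.2, sub_self, add_zero]

lemma KL_bool_le_of_abs_sub_le {p r : Bool → ℝ} (hp : IsPmf p) (hr : IsPmf r) {δ : ℝ} (hδ : 0 < δ)
    (hδr : ∀ b, δ ≤ r b) (hpr : |p true - r true| ≤ δ) :
    KL p r ≤ δ / ((1 - δ) * Real.log 2) := by
  have hpos (b : Bool) : 0 < r b := hδ.trans_le (hδr b)
  have hpsum : p false = 1 - p true := by linarith [hp.2, Fintype.sum_bool p]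
  have hrsum : r false = 1 - r true := by linarith [hr.2, Fintype.sum_bool r]
  have hδ1 : 0 < 1 - δ := by linarith [hδr true, hpos false]
  have hprod : δ * (1 - δ) ≤ r true * r false := by
    have := hδr true
    have := hδr false
    nlinarith
  have hchi : ∑ b, (p b - r b) ^ 2 / r b = (p true - r true) ^ 2 / (r true * r false) := by
    have ht := (hpos true).ne'
    have hf := (hpos false).ne'
    rw [hrsum] at hf ⊢
    rw [Fintype.sum_bool, hpsum, hrsum]
    field_simp
    ring
  calc KL p r ≤ (p true - r true) ^ 2 / (r true * r false) / Real.log 2 :=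
        hchi ▸ KL_le_chiSq hp hr hpos
    _ ≤ δ ^ 2 / (δ * (1 - δ)) / Real.log 2 := by
        have := Real.log_pos one_lt_two
        have hsq : (p true - r true) ^ 2 ≤ δ ^ 2 :=
          sq_le_sq' (neg_le_of_abs_le hpr) (le_of_abs_le hpr)
        gcongr ?_ / ?_ / _
    _ = δ / ((1 - δ) * Real.log 2) := by field_simp

/-- The output law of a channel `K` fed with an input of law `P`. -/
def outputLaw (P : α → ℝ) (K : α → β → ℝ) (b : β) : ℝ := ∑ a, P a * K a b

lemma sum_outputLaw_mul (P : α → ℝ) (K : α → β → ℝ) (f : β → ℝ) :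
    ∑ b, outputLaw P K b * f b = ∑ a, P a * ∑ b, K a b * f b := by
  simp only [outputLaw, Finset.sum_mul, Finset.mul_sum, mul_assoc]
  exact Finset.sum_comm

lemma sum_outputLaw {P : α → ℝ} {K : α → β → ℝ} (hP : ∑ a, P a = 1)
    (hK : ∀ a, ∑ b, K a b = 1) : ∑ b, outputLaw P K b = 1 := by
  simpa [hK, hP] using sum_outputLaw_mul P K fun _ => 1

lemma isPmf_outputLaw {P : α → ℝ} {K : α → β → ℝ} (hP : IsPmf P) (hK : IsKernel K) :
    IsPmf (outputLaw P K) :=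
  ⟨fun b => Finset.sum_nonneg fun a _ => mul_nonneg (hP.1 a) ((hK a).1 b),
    sum_outputLaw hP.2 fun a => (hK a).2⟩

lemma sum_mul_KL_eq (P : α → ℝ) (K : α → β → ℝ) {r : β → ℝ} (hr : ∀ b, 0 < r b) :
    ∑ a, P a * KL (K a) r =
      ent (outputLaw P K) - ∑ a, P a * ent (K a) + KL (outputLaw P K) r := by
  simp only [KL_eq_neg_ent_sub _ hr, sum_outputLaw_mul, mul_sub, mul_neg,
    Finset.sum_sub_distrib, Finset.sum_neg_distrib]
  ring

lemma ent_outputLaw_sub_le {P : α → ℝ} {K : α → β → ℝ} (hP : IsPmf P) (hK : IsKernel K)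
    {r : β → ℝ} (hr : IsPmf r) (hr' : ∀ b, 0 < r b) {C : ℝ} (hC : ∀ a, KL (K a) r ≤ C) :
    ent (outputLaw P K) - ∑ a, P a * ent (K a) ≤ C :=
  calc ent (outputLaw P K) - ∑ a, P a * ent (K a)
      ≤ ∑ a, P a * KL (K a) r := by
        linarith [sum_mul_KL_eq P K hr', KL_nonneg (isPmf_outputLaw hP hK) hr hr']
    _ ≤ ∑ a, P a * C := Finset.sum_le_sum fun a _ => mul_le_mul_of_nonneg_left (hC a) (hP.1 a)
    _ = C := by rw [← Finset.sum_mul, hP.2, one_mul]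

end Divergence

section ConditionalInformation

variable {Ω α β γ : Type*} [Fintype Ω] [Fintype α] [Fintype β] [Fintype γ] [DecidableEq α]
  [DecidableEq β] [DecidableEq γ] {p : Ω → ℝ} {X : Ω → α} {Y : Ω → γ} {Z : Ω → β}
  {P : α → ℝ} {Q : β → ℝ} {K : α → β → γ → ℝ}

lemma cMI_eq_of_law (hP : ∑ a, P a = 1) (hK : ∀ a b, ∑ c, K a b c = 1)
    (h : ∀ a b c, law p (fun ω => (X ω, Z ω, Y ω)) (a, b, c) = P a * Q b * K a b c) :
    cMI p X Y Z = ∑ b, Q b * (ent (outputLaw P fun a => K a b) - ∑ a, P a * ent (K a b)) := by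
  have hXZY : law p (fun ω => ((X ω, Z ω), Y ω)) =
      fun t => P t.1.1 * Q t.1.2 * K t.1.1 t.1.2 t.2 := by
    funext t
    simp only [← h, law, Prod.ext_iff, and_assoc]
  have hXZ : law p (fun ω => (X ω, Z ω)) = fun t => P t.1 * Q t.2 := by
    funext t
    rw [← sum_law_pair_right p _ Y]
    simp only [hXZY, ← Finset.mul_sum, hK, mul_one]
  have hZY : law p (fun ω => (Z ω, Y ω)) =
      fun t => Q t.1 * outputLaw P (fun a => K a t.1) t.2 := by
    funext t
    rw [← sum_law_pair_left p X]
    simp only [h, outputLaw, Finset.mul_sum]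
    exact Finset.sum_congr rfl fun a _ => by ring
  have hZ : law p Z = Q := by
    funext b
    rw [← sum_law_pair_left p X]
    simp only [hXZ, ← Finset.sum_mul, hP, one_mul]
  have hXYZ_perm : H p (fun ω => (X ω, Y ω, Z ω)) = H p (fun ω => ((X ω, Z ω), Y ω)) :=
    H_congr p fun _ _ => by simp only [Prod.mk.injEq]; tauto
  have hYZ_perm : H p (fun ω => (Y ω, Z ω)) = H p (fun ω => (Z ω, Y ω)) :=
    H_congr p fun _ _ => by simp only [Prod.mk.injEq, and_comm]
  have hXZY_ent := ent_mul_kernel (fun t : α × β => P t.1 * Q t.2) fun t => hK t.1 t.2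
  have hZY_ent := ent_mul_kernel Q fun b => sum_outputLaw hP fun a => hK a b
  rw [cMI, Hc, Hc, hXYZ_perm, hYZ_perm, H, H, H, H, hXZY, hXZ, hZY, hZ, hXZY_ent, hZY_ent,
    Fintype.sum_prod_type_right]
  simp only [mul_sub, Finset.sum_sub_distrib, Finset.mul_sum, mul_comm (P _) (Q _), mul_assoc]
  ring

/-- Against any reference laws `r b`, the worst relative entropy bounds the information. -/
lemma cMI_le_of_law (hP : IsPmf P) (hQ : IsPmf Q) (hK : ∀ a b, IsPmf (K a b))
    (h : ∀ a b c, law p (fun ω => (X ω, Z ω, Y ω)) (a, b, c) = P a * Q b * K a b c)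
    {r : β → γ → ℝ} (hr : ∀ b, IsPmf (r b)) (hr' : ∀ b c, 0 < r b c) {C : ℝ}
    (hC : ∀ a b, KL (K a b) (r b) ≤ C) : cMI p X Y Z ≤ C := by
  rw [cMI_eq_of_law hP.2 (fun a b => (hK a b).2) h]
  calc ∑ b, Q b * (ent (outputLaw P fun a => K a b) - ∑ a, P a * ent (K a b))
      ≤ ∑ b, Q b * C := Finset.sum_le_sum fun b _ => mul_le_mul_of_nonneg_left
        (ent_outputLaw_sub_le hP (fun a => hK a b) (hr b) (hr' b) fun a => hC a b) (hQ.1 b)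
    _ = C := by rw [← Finset.sum_mul, hQ.2, one_mul]

end ConditionalInformation

section SchemeTwo

omit [DecidableEq A1] [DecidableEq A2] in
/-- The numbers below `I(U1;Y|U2)` for some admissible law form a lower set of `ℝ`, hence a
convex set, so the bound survives the passage to the convex hull. -/
theorem exists_le_cMI_of_mem_RegionR2 {PS : AS → ℝ} {W : A1 → A2 → AS → AY × AZ → ℝ}
    {R : ℝ × ℝ} (hR : R ∈ RegionR2 PS W) :
    ∃ L : AuxLawR2 A1 A2 AS AY AZ,
      R.1 ≤ cMI (L.joint PS W) (fun ω => ω.u1) (fun ω => ω.y) (fun ω => ω.u2) := by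
  let T : Set ℝ := {x | ∃ L : AuxLawR2 A1 A2 AS AY AZ,
    x ≤ cMI (L.joint PS W) (fun ω => ω.u1) (fun ω => ω.y) (fun ω => ω.u2)}
  have hT : IsLowerSet T := fun a b hba ⟨L, hL⟩ => ⟨L, hba.trans hL⟩
  have hconv : Convex ℝ (Prod.fst ⁻¹' T : Set (ℝ × ℝ)) :=
    hT.ordConnected.convex.is_linear_preimage (LinearMap.fst ℝ ℝ ℝ).isLinear
  refine convexHull_min ?_ hconv hR
  rintro R ⟨L, (hR | hR) | hR⟩ <;>
  · obtain ⟨-, -, r11, r12, r21, r22, -, hr12, -, -, -, -, hR1, -, -⟩ := hR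
    exact ⟨L, by linarith [hR1.trans (min_le_right _ _)]⟩

omit [DecidableEq A1] [DecidableEq A2] [DecidableEq AS] [DecidableEq AZ] in
lemma law_joint_u1_u2_y (L : AuxLawR2 A1 A2 AS AY AZ) (PS : AS → ℝ)
    (W : A1 → A2 → AS → AY × AZ → ℝ) (a : L.U1) (b : L.U2) (y : AY) :
    law (L.joint PS W) (fun ω => (ω.u1, ω.u2, ω.y)) (a, b, y) =
      L.PU1 a * L.PU2 b *
        ∑ x1, ∑ x2, ∑ s, PS s * L.PX1 a s x1 * L.PX2 b s x2 * ∑ z, W x1 x2 s (y, z) := by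
  have hmass (x1 : A1) (x2 : A2) (s : AS) (y' : AY) (z : AZ) :
      L.joint PS W (a, b, x1, x2, s, y', z) =
        L.PU1 a * L.PU2 b * (PS s * L.PX1 a s x1 * L.PX2 b s x2 * W x1 x2 s (y', z)) := by
    simp only [AuxLawR2.joint, jointR2, O7.u1, O7.u2, O7.x1, O7.x2, O7.s, O7.y, O7.z]
    ring
  simp only [law, Fintype.sum_prod_type, O7.u1, O7.u2, O7.y, Prod.mk.injEq, ite_and,
    Finset.sum_ite_irrel, Finset.sum_const_zero, Finset.sum_ite_eq', Finset.mem_univ, if_true,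
    hmass]
  simp only [Finset.mul_sum]

lemma law_joint_Wex1 (p : ℝ) (L : AuxLawR2 Bool Bool Bool Bool Bool) (a : L.U1) (b : L.U2)
    (y : Bool) :
    law (L.joint (PSp p) Wex1) (fun ω => (ω.u1, ω.u2, ω.y)) (a, b, y) =
      L.PU1 a * L.PU2 b * ((1 - p) * L.PX1 a false y + p * L.PX2 b true y) := by
  have hW (x1 x2 s : Bool) : ∑ z, Wex1 x1 x2 s (y, z) = if y = cond s x2 x1 then 1 else 0 := by
    simp only [Wex1, and_comm (a := y = _), ite_and, Finset.sum_ite_eq',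
      Finset.mem_univ, if_true]
  have hx1 := (L.hPX1 a true).2
  have hx2 := (L.hPX2 b false).2
  rw [Fintype.sum_bool] at hx1 hx2
  rw [law_joint_u1_u2_y]
  congr 1
  simp only [hW, Fintype.sum_bool, PSp, cond_true, cond_false, if_true, Bool.false_eq_true,
    if_false]
  cases y <;> simp only [reduceCtorEq, if_true, if_false]
  · linear_combination (1 - p) * L.PX1 a false false * hx2 + p * L.PX2 b true false * hx1
  · linear_combination (1 - p) * L.PX1 a false true * hx2 + p * L.PX2 b true true * hx1

theorem cMI_joint_Wex1_le {p : ℝ} (hp0 : 0 ≤ p) (hp1 : p < 1)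
    (L : AuxLawR2 Bool Bool Bool Bool Bool) :
    cMI (L.joint (PSp p) Wex1) (fun ω => ω.u1) (fun ω => ω.y) (fun ω => ω.u2) ≤
      (1 - p) / ((1 + p) * Real.log 2) := by
  have hfair : IsPmf fun _ : Bool => (1 / 2 : ℝ) := ⟨fun _ => by norm_num, by norm_num⟩
  have hδr (b : L.U2) (y : Bool) : (1 - p) / 2 ≤ (1 - p) * (1 / 2) + p * L.PX2 b true y := by
    linarith [mul_nonneg hp0 ((L.hPX2 b true).1 y)]
  refine cMI_le_of_law L.hPU1 L.hPU2
    (fun a b => isPmf_mix hp0 hp1.le (L.hPX1 a false) (L.hPX2 b true)) (law_joint_Wex1 p L)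
    (fun b => isPmf_mix hp0 hp1.le hfair (L.hPX2 b true)) (fun b y => by linarith [hδr b y])
    fun a b => ?_
  have hsum := (L.hPX1 a false).2
  rw [Fintype.sum_bool] at hsum
  have hdev : |L.PX1 a false true - 1 / 2| ≤ 1 / 2 :=
    abs_le.2 ⟨by linarith [(L.hPX1 a false).1 true], by linarith [(L.hPX1 a false).1 false]⟩
  refine (KL_bool_le_of_abs_sub_le (isPmf_mix hp0 hp1.le (L.hPX1 a false) (L.hPX2 b true))
    (isPmf_mix hp0 hp1.le hfair (L.hPX2 b true)) (by linarith) (hδr b) ?_).trans_eq ?_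
  · rw [add_sub_add_right_eq_sub, ← mul_sub, abs_mul, abs_of_pos (sub_pos.2 hp1)]
    linarith [mul_le_mul_of_nonneg_left hdev (sub_pos.2 hp1).le]
  · rw [show 1 - (1 - p) / 2 = (1 + p) / 2 by ring]
    field_simp

lemma cMI_joint_Wex1_lt {p : ℝ} (hp : 1 / 2 ≤ p) (hp1 : p < 1)
    (L : AuxLawR2 Bool Bool Bool Bool Bool) :
    cMI (L.joint (PSp p) Wex1) (fun ω => ω.u1) (fun ω => ω.y) (fun ω => ω.u2) < 1 - p := by
  have hlog : 1 < (1 + p) * Real.log 2 := by nlinarith [Real.log_two_gt_d9]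
  exact (cMI_joint_Wex1_le (by linarith) hp1 L).trans_lt
    (div_lt_self (sub_pos.2 hp1) hlog)

end SchemeTwo

/-- **Example 1, first channel (Coding scheme 1 beats Coding scheme 2).**
The rate pair `(min{1-p, 1-h(p)}, 0)` lies in `R_1`; every pair `(R1, 0)` in `R_2` is
bounded by `I(U1;Y|U2)` for some admissible law; and for `p` sufficiently large
`I(U1;Y|U2) < min{1-p, 1-h(p)}` for every admissible law, so the above pair is not in
`R_2`. -/
theorem example1_first_channel :
    (∀ p : ℝ, 0 < p → p < 1 →
      (min (1 - p) (1 - hb p), (0 : ℝ)) ∈ RegionR1 (PSp p) Wex1) ∧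
    (∀ p : ℝ, 0 < p → p < 1 → ∀ R1 : ℝ, (R1, (0 : ℝ)) ∈ RegionR2 (PSp p) Wex1 →
      ∃ L : AuxLawR2 Bool Bool Bool Bool Bool,
        R1 ≤ cMI (L.joint (PSp p) Wex1) (fun ω => ω.u1) (fun ω => ω.y)
          (fun ω => ω.u2)) ∧
    (∃ p0 : ℝ, p0 < 1 ∧ ∀ p : ℝ, p0 < p → p < 1 →
      (∀ L : AuxLawR2 Bool Bool Bool Bool Bool,
        cMI (L.joint (PSp p) Wex1) (fun ω => ω.u1) (fun ω => ω.y) (fun ω => ω.u2) <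
          min (1 - p) (1 - hb p)) ∧
      (min (1 - p) (1 - hb p), (0 : ℝ)) ∉ RegionR2 (PSp p) Wex1) := by
  refine ⟨fun p hp0 hp1 => mem_RegionR1_Wex1 hp0.le hp1.le,
    fun p _ _ R1 hR => exists_le_cMI_of_mem_RegionR2 hR, ?_⟩
  have hnear := eventually_hb_lt_self.and (eventually_gt_nhds one_half_lt_one)
  obtain ⟨p0, hp0, hgap⟩ :=
    mem_nhdsLT_iff_exists_Ioo_subset.1 (hnear.filter_mono nhdsWithin_le_nhds)
  refine ⟨p0, hp0, fun p hp hp1 => ?_⟩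
  obtain ⟨hhb, hhalf⟩ := hgap ⟨hp, hp1⟩
  have hlt (L : AuxLawR2 Bool Bool Bool Bool Bool) :
      cMI (L.joint (PSp p) Wex1) (fun ω => ω.u1) (fun ω => ω.y) (fun ω => ω.u2) <
        min (1 - p) (1 - hb p) := by
    rw [min_eq_left (by linarith)]
    exact cMI_joint_Wex1_lt hhalf.le hp1 L
  refine ⟨hlt, fun hmem => ?_⟩
  obtain ⟨L, hL⟩ := exists_le_cMI_of_mem_RegionR2 hmem
  exact (hlt L).not_ge hL

end Paper
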